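/- arXiv:2012.14525 — 5 statements merged into one kernel-verified Lean document; each statement's English description precedes it below -/
import Mathlib

section
/- Suppose the Assumptions hold, d₁ = d₂, and (r,s) is a red arrow with ⟨r,s⟩ = ⟨a,d₁⟩. Then there exists r' ∈ X with r' ≠ r such that {r,r'} is an increasing pair and (r',s) is a red arrow. -/
noncomputable section
open Classical

/-- The L1 (Manhattan) metric on ℝ². -/
def rho (u v : ℝ × ℝ) : ℝ := |u.1 - v.1| + |u.2 - v.2|

/-- `z` is between `u` and `v` (w.r.t. the L1 metric): the three points are
pairwise distinct and `ρ(u,v) = ρ(u,z) + ρ(z,v)`. -/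
def MBtw (u z v : ℝ × ℝ) : Prop :=
  u ≠ z ∧ z ≠ v ∧ u ≠ v ∧ rho u v = rho u z + rho z v

/-- The line of `X` induced by distinct points `u, v`. -/
def lineThrough (X : Finset (ℝ × ℝ)) (u v : ℝ × ℝ) : Finset (ℝ × ℝ) :=
  X.filter fun z => z = u ∨ z = v ∨ MBtw u z v ∨ MBtw z u v ∨ MBtw u v z

/-- `X` is non-collinear: no line induced by two distinct points of `X` equals `X`. -/
def NonCollinear (X : Finset (ℝ × ℝ)) : Prop :=
  ∀ u ∈ X, ∀ v ∈ X, u ≠ v → lineThrough X u v ≠ X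

/-- `{p,q}` is an increasing pair. -/
def IncPair (p q : ℝ × ℝ) : Prop := 0 < (q.1 - p.1) * (q.2 - p.2)

/-- `{p,q}` is a decreasing pair. -/
def DecPair (p q : ℝ × ℝ) : Prop := (q.1 - p.1) * (q.2 - p.2) < 0

/-- The partial order `≤_I`. -/
def leI (c d : ℝ × ℝ) : Prop := c.1 ≤ d.1 ∧ c.2 ≤ d.2

/-- `c <_I d`. -/
def ltI (c d : ℝ × ℝ) : Prop := leI c d ∧ c ≠ d

/-- The partial order `≤_D`. -/
def leD (c d : ℝ × ℝ) : Prop := c.1 ≤ d.1 ∧ d.2 ≤ c.2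

/-- `c <_D d`. -/
def ltD (c d : ℝ × ℝ) : Prop := leD c d ∧ c ≠ d

/-- `(p,q)` is a blue arrow of `X`. -/
def BlueArrow (X : Finset (ℝ × ℝ)) (p q : ℝ × ℝ) : Prop :=
  p ∈ X ∧ q ∈ X ∧ IncPair p q ∧ ltI p q ∧
  ∀ a b, a ∈ X → b ∈ X → IncPair a b → ltI a b →
    lineThrough X a b = lineThrough X p q → (ltI q b ∨ (q = b ∧ leI a p))

/-- `(p,q)` is a red arrow of `X`. -/
def RedArrow (X : Finset (ℝ × ℝ)) (p q : ℝ × ℝ) : Prop :=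
  p ∈ X ∧ q ∈ X ∧ DecPair p q ∧ ltD p q ∧
  ∀ a b, a ∈ X → b ∈ X → DecPair a b → ltD a b →
    lineThrough X a b = lineThrough X p q → (ltD q b ∨ (q = b ∧ leD a p))

/-- An arrow is a blue or a red arrow. -/
def Arrow (X : Finset (ℝ × ℝ)) (p q : ℝ × ℝ) : Prop :=
  BlueArrow X p q ∨ RedArrow X p q

/-- `a` is not an endpoint of any arrow of `X`. -/
def NotEndpoint (X : Finset (ℝ × ℝ)) (a : ℝ × ℝ) : Prop :=
  ∀ p q, Arrow X p q → a ≠ p ∧ a ≠ q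

theorem abs_btw (u z v : ℝ) : |u - v| ≤ |u - z| + |z - v| := abs_sub_le u z v

theorem abs_btw_eq (u z v : ℝ) :
    |u - v| = |u - z| + |z - v| ↔ ((u ≤ z ∧ z ≤ v) ∨ (v ≤ z ∧ z ≤ u)) := by
  constructor
  · intro h
    rcases abs_cases (u - v) with h1 | h1 <;> rcases abs_cases (u - z) with h2 | h2 <;>
      rcases abs_cases (z - v) with h3 | h3 <;>
      first
      | exact Or.inl ⟨by linarith, by linarith⟩
      | exact Or.inr ⟨by linarith, by linarith⟩
  · rintro (⟨h1, h2⟩ | ⟨h1, h2⟩)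
    · rw [abs_of_nonpos (by linarith), abs_of_nonpos (by linarith), abs_of_nonpos (by linarith)]
      ring
    · rw [abs_of_nonneg (by linarith), abs_of_nonneg (by linarith), abs_of_nonneg (by linarith)]
      ring

theorem rho_eq (u z v : ℝ × ℝ) : rho u v = rho u z + rho z v ↔
    ((u.1 ≤ z.1 ∧ z.1 ≤ v.1) ∨ (v.1 ≤ z.1 ∧ z.1 ≤ u.1)) ∧
    ((u.2 ≤ z.2 ∧ z.2 ≤ v.2) ∨ (v.2 ≤ z.2 ∧ z.2 ≤ u.2)) := by
  rw [← abs_btw_eq, ← abs_btw_eq]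
  have h1 := abs_btw u.1 z.1 v.1
  have h2 := abs_btw u.2 z.2 v.2
  unfold rho
  constructor
  · intro h
    constructor <;> linarith
  · rintro ⟨h, h'⟩
    linarith

theorem mem_line (X : Finset (ℝ × ℝ)) (u v z : ℝ × ℝ) (huv : u ≠ v) :
    z ∈ lineThrough X u v ↔ z ∈ X ∧
      (rho u v = rho u z + rho z v ∨ rho z v = rho z u + rho u v ∨
        rho u z = rho u v + rho v z) := by
  have key : ∀ p : ℝ × ℝ, rho p p = 0 := by intro p; simp [rho]
  unfold lineThrough
  rw [Finset.mem_filter]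
  unfold MBtw
  apply and_congr_right
  intro _
  by_cases h1 : z = u
  · subst h1; simp [key]
  by_cases h2 : z = v
  · subst h2; simp [key]
  grind

theorem mem_line_dec (X : Finset (ℝ × ℝ)) (u v z : ℝ × ℝ) (h1 : u.1 < v.1) (h2 : v.2 < u.2) :
    z ∈ lineThrough X u v ↔ z ∈ X ∧ (leD z u ∨ leD u z) ∧ (leD z v ∨ leD v z) := by
  rw [mem_line X u v z (by rintro rfl; exact lt_irrefl _ h1), rho_eq, rho_eq, rho_eq]
  unfold leD
  apply and_congr_right
  intro _
  grind

theorem vert_pt (X : Finset (ℝ × ℝ)) (hnc : NonCollinear X) (u v : ℝ × ℝ) (hu : u ∈ X)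
    (hv : v ∈ X) (h1 : u.1 = v.1) (h2 : v.2 < u.2) :
    ∃ z ∈ X, v.2 < z.2 ∧ z.2 < u.2 ∧ z.1 ≠ u.1 := by
  have hne : u ≠ v := by rintro rfl; exact lt_irrefl _ h2
  by_contra! hcon
  apply hnc u hu v hv hne
  ext z
  rw [mem_line X u v z hne, rho_eq, rho_eq, rho_eq]
  have := hcon z
  grind

theorem horiz_pt (X : Finset (ℝ × ℝ)) (hnc : NonCollinear X) (u v : ℝ × ℝ) (hu : u ∈ X)
    (hv : v ∈ X) (h1 : u.2 = v.2) (h2 : v.1 < u.1) :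
    ∃ z ∈ X, v.1 < z.1 ∧ z.1 < u.1 ∧ z.2 ≠ u.2 := by
  have hne : u ≠ v := by rintro rfl; exact lt_irrefl _ h2
  by_contra! hcon
  apply hnc u hu v hv hne
  ext z
  rw [mem_line X u v z hne, rho_eq, rho_eq, rho_eq]
  have := hcon z
  grind

theorem dec_iff (p q : ℝ × ℝ) : (DecPair p q ∧ ltD p q) ↔ (p.1 < q.1 ∧ q.2 < p.2) := by
  unfold DecPair ltD leD
  constructor
  · rintro ⟨h, ⟨h1, h2⟩, -⟩
    constructor
    · rcases h1.lt_or_eq with h3 | h3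
      · exact h3
      · rw [h3] at h; simp at h
    · rcases h2.lt_or_eq with h3 | h3
      · exact h3
      · rw [h3] at h; simp at h
  · rintro ⟨h1, h2⟩
    refine ⟨mul_neg_of_pos_of_neg (by linarith) (by linarith), ⟨h1.le, h2.le⟩, ?_⟩
    rintro rfl
    exact lt_irrefl _ h1

theorem red_iff (X : Finset (ℝ × ℝ)) (p q : ℝ × ℝ) : RedArrow X p q ↔
    (p ∈ X ∧ q ∈ X ∧ (p.1 < q.1 ∧ q.2 < p.2) ∧ ∀ a b, a ∈ X → b ∈ X →
      (a.1 < b.1 ∧ b.2 < a.2) → lineThrough X a b = lineThrough X p q →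
      (ltD q b ∨ (q = b ∧ leD a p))) := by
  unfold RedArrow
  constructor
  · rintro ⟨h1, h2, h3, h4, h5⟩
    exact ⟨h1, h2, (dec_iff p q).1 ⟨h3, h4⟩, fun a b ha hb hab =>
      h5 a b ha hb ((dec_iff a b).2 hab).1 ((dec_iff a b).2 hab).2⟩
  · rintro ⟨h1, h2, h3, h5⟩
    exact ⟨h1, h2, ((dec_iff p q).2 h3).1, ((dec_iff p q).2 h3).2, fun a b ha hb hab hab' =>
      h5 a b ha hb ((dec_iff a b).1 ⟨hab, hab'⟩)⟩

/-- Coordinate systems in which the order `leD` has its usual shape: the standard one and its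
reflection `(-y, -x)`. -/
structure Coord (X : Finset (ℝ × ℝ)) (f g : ℝ × ℝ → ℝ) : Prop where
  ext : ∀ p q, f p = f q → g p = g q → p = q
  le : ∀ p q, leD p q ↔ f p ≤ f q ∧ g q ≤ g p
  lt : ∀ p q : ℝ × ℝ, (p.1 < q.1 ∧ q.2 < p.2) ↔ f p < f q ∧ g q < g p
  vert : ∀ u v, u ∈ X → v ∈ X → f u = f v → g v < g u → ∃ z ∈ X, g v < g z ∧ g z < g u ∧ f z ≠ f u
  horiz : ∀ u v, u ∈ X → v ∈ X → g u = g v → f v < f u → ∃ z ∈ X, f v < f z ∧ f z < f u ∧ g z ≠ g u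

theorem Coord.mem {X : Finset (ℝ × ℝ)} {f g : ℝ × ℝ → ℝ} (C : Coord X f g) (u v z : ℝ × ℝ)
    (h : f u < f v ∧ g v < g u) : z ∈ lineThrough X u v ↔ z ∈ X ∧
      ((f z ≤ f u ∧ g u ≤ g z) ∨ (f u ≤ f z ∧ g z ≤ g u)) ∧
      ((f z ≤ f v ∧ g v ≤ g z) ∨ (f v ≤ f z ∧ g z ≤ g v)) := by
  have h' := (C.lt u v).2 h
  rw [mem_line_dec X u v z h'.1 h'.2]
  simp only [C.le]

theorem coord_std (X : Finset (ℝ × ℝ)) (hnc : NonCollinear X) :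
    Coord X (fun p => p.1) (fun p => p.2) where
  ext p q h1 h2 := Prod.ext h1 h2
  le p q := Iff.rfl
  lt p q := Iff.rfl
  vert u v hu hv h1 h2 := vert_pt X hnc u v hu hv h1 h2
  horiz u v hu hv h1 h2 := horiz_pt X hnc u v hu hv h1 h2

theorem coord_refl (X : Finset (ℝ × ℝ)) (hnc : NonCollinear X) :
    Coord X (fun p => -p.2) (fun p => -p.1) where
  ext p q h1 h2 := Prod.ext (neg_injective h2) (neg_injective h1)
  le p q := by unfold leD; simp; tauto
  lt p q := by simp; tauto
  vert u v hu hv h1 h2 := by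
    obtain ⟨z, hz, h3, h4, h5⟩ := horiz_pt X hnc v u hv hu (by simpa using h1.symm) (by simpa using h2)
    refine ⟨z, hz, by simpa using h4, by simpa using h3, ?_⟩
    simp only [ne_eq, neg_inj] at *
    rw [h1]; exact h5
  horiz u v hu hv h1 h2 := by
    obtain ⟨z, hz, h3, h4, h5⟩ := vert_pt X hnc v u hv hu (by simpa using h1.symm) (by simpa using h2)
    refine ⟨z, hz, by simpa using h4, by simpa using h3, ?_⟩
    simp only [ne_eq, neg_inj] at *
    rw [h1]; exact h5

/-- The case `s = d` with `r` straight below `a`. -/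
theorem caseA {X : Finset (ℝ × ℝ)} {f g : ℝ × ℝ → ℝ} (C : Coord X f g) (a d r : ℝ × ℝ)
    (haX : a ∈ X) (hrX : r ∈ X) (hd : f a < f d ∧ g d < g a)
    (hs1 : ∀ z ∈ X, ¬(f a < f z ∧ g d < g z ∧ g z < g a))
    (hr : f r = f a) (hr1 : g r < g a) (hr2 : g d < g r)
    (hline : lineThrough X r d = lineThrough X a d) : False := by
  obtain ⟨z, hz, h1, h2, h3⟩ := C.vert a r haX hrX hr.symm hr1
  have hm : z ∈ lineThrough X r d ↔ z ∈ lineThrough X a d := by rw [hline]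
  rw [C.mem r d z (by grind), C.mem a d z hd] at hm
  have := hs1 z hz
  grind

/-- The case `s ≠ d` with `r` to the left of `a` and `s` straight below `a`. -/
theorem caseB {X : Finset (ℝ × ℝ)} {f g : ℝ × ℝ → ℝ} (C : Coord X f g) (a d r s : ℝ × ℝ)
    (haX : a ∈ X) (hd : f a < f d ∧ g d < g a)
    (hQ2 : ∀ z ∈ X, ¬(f z < f a ∧ g a < g z))
    (hs1 : ∀ z ∈ X, ¬(f a < f z ∧ g d < g z ∧ g z < g a))
    (hr1 : f r < f a) (hr2 : g r = g a) (hsa : f s = f a) (hsa2 : g s < g a) (hds : g d ≤ g s)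
    (hrs : RedArrow X r s) (hline : lineThrough X r s = lineThrough X a d) :
    ∃ r' ∈ X, f r' < f r ∧ g r' < g r ∧ RedArrow X r' s := by
  rw [red_iff] at hrs
  obtain ⟨hrX, hsX, hrs, hmin⟩ := hrs
  rw [C.lt] at hrs
  have F1 : ∀ z ∈ X, ¬ (f r ≤ f z ∧ f z < f a ∧ g s ≤ g z ∧ g z < g a) := by
    intro z hz hh
    have hm : z ∈ lineThrough X r s ↔ z ∈ lineThrough X a d := by rw [hline]
    rw [C.mem r s z hrs, C.mem a d z hd] at hm
    grind
  obtain ⟨b, hb, hb1, hb2, hb3⟩ := C.horiz a r haX hrX hr2.symm hr1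
  have hb4 : g b < g s := by
    have := F1 b hb
    have := hQ2 b hb
    grind
  obtain ⟨p, hp, hp1, hp2, hp3⟩ := C.vert a s haX hsX hsa.symm hsa2
  have hp4 : f p < f r := by
    have := F1 p hp
    have := hs1 p hp
    grind
  obtain ⟨q, hqm, hq⟩ := Finset.exists_max_image
    (X.filter fun z => f z < f r ∧ g s < g z ∧ g z < g a) (fun z => f z - g z)
    ⟨p, by simp [hp, hp1, hp2, hp4]⟩
  rw [Finset.mem_filter] at hqm
  obtain ⟨hqX, hq1, hq2, hq3⟩ := hqm
  have hqs : f q < f s ∧ g s < g q := by grind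
  refine ⟨q, hqX, hq1, by grind, ?_⟩
  rw [red_iff]
  refine ⟨hqX, hsX, (C.lt q s).2 hqs, ?_⟩
  intro u t hu ht hut hl
  rw [C.lt] at hut
  have mu : u ∈ lineThrough X q s := by rw [← hl, C.mem u t u hut]; grind
  have mt : t ∈ lineThrough X q s := by rw [← hl, C.mem u t t hut]; grind
  have mb : b ∈ lineThrough X u t ↔ b ∈ lineThrough X q s := by rw [hl]
  rw [C.mem q s _ hqs] at mu mt mb
  rw [C.mem u t _ hut] at mb
  by_cases hts : t = s
  · right
    refine ⟨hts.symm, ?_⟩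
    rw [C.le]
    subst hts
    have h1 := F1 u hu
    have h2 := hq u
    rw [Finset.mem_filter] at h2
    grind
  · left
    unfold ltD
    rw [C.le]
    refine ⟨?_, fun h => hts h.symm⟩
    by_contra hnot
    have h1 := F1 t ht
    have h0 : f t ≤ f s ∧ g s ≤ g t := by grind
    have h2 : f t < f r := by
      by_contra h3
      by_cases h4 : f t = f a
      · have hrt : f r < f t ∧ g t < g r := by grind
        have hgt : g s < g t := by
          rcases h0.2.lt_or_eq with h5 | h5
          · exact h5
          · exact absurd (C.ext t s (by rw [h4, hsa]) h5.symm) hts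
        have hgt2 : g t < g a := by grind
        have hl2 : lineThrough X r t = lineThrough X r s := by
          ext z
          rw [C.mem r t z hrt, C.mem r s z hrs]
          have k1 := F1 z
          have k2 := hs1 z
          have k3 := hQ2 z
          grind
        have hm := hmin r t hrX ht ((C.lt r t).2 hrt) hl2
        unfold ltD at hm
        rw [C.le] at hm
        grind
      · grind
    grind

/-- Under the Assumptions with `d₁ = d₂`, if `(r,s)` is the red arrow for the
line `⟨a,d₁⟩`, then there is another red arrow `(r',s)` with `r' ≠ r` and
`{r,r'}` an increasing pair. -/
theorem second_red_arrow_one_d (X : Finset (ℝ × ℝ)) (a d₁ d₂ r s : ℝ × ℝ)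
    (hnc : NonCollinear X) (haX : a ∈ X) (hiso : NotEndpoint X a)
    (hQ2 : ∀ z ∈ X, ¬(z.1 < a.1 ∧ a.2 < z.2))
    (hQ4 : ∃ z ∈ X, a.1 < z.1 ∧ z.2 < a.2)
    (hd1X : d₁ ∈ X) (hd1 : a.1 < d₁.1 ∧ d₁.2 < a.2)
    (hd1strip : ∀ z ∈ X, ¬(a.1 < z.1 ∧ d₁.2 < z.2 ∧ z.2 < a.2))
    (hd1seg : ∀ z ∈ X, ¬(a.1 < z.1 ∧ z.1 < d₁.1 ∧ z.2 = d₁.2))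
    (hd2X : d₂ ∈ X) (hd2 : a.1 < d₂.1 ∧ d₂.2 < a.2)
    (hd2strip : ∀ z ∈ X, ¬(a.1 < z.1 ∧ z.1 < d₂.1 ∧ z.2 < a.2))
    (hd2seg : ∀ z ∈ X, ¬(z.1 = d₂.1 ∧ d₂.2 < z.2 ∧ z.2 < a.2))
    (hdd : d₁ = d₂)
    (hrs : RedArrow X r s) (hline : lineThrough X r s = lineThrough X a d₁) :
    ∃ r' ∈ X, r' ≠ r ∧ IncPair r r' ∧ RedArrow X r' s := by
  subst hdd
  have hrs' := hrs
  rw [red_iff] at hrs'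
  obtain ⟨hrX, hsX, hrs1, hmin⟩ := hrs'
  have hra := hiso r s (Or.inr hrs)
  have C := coord_std X hnc
  have C' := coord_refl X hnc
  have mr : r ∈ lineThrough X a d₁ := by rw [← hline, C.mem r s r hrs1]; grind
  have ms : s ∈ lineThrough X a d₁ := by rw [← hline, C.mem r s s hrs1]; grind
  rw [C.mem a d₁ _ hd1] at mr ms
  have Q2r := hQ2 r hrX
  have Q2s := hQ2 s hsX
  have h1r := hd1strip r hrX
  have h2r := hd2strip r hrX
  have h1s := hd1strip s hsX
  have h2s := hd2strip s hsX
  rcases hmin a d₁ haX hd1X hd1 hline.symm with h | ⟨rfl, h⟩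
  · obtain ⟨⟨hsd1, hsd2⟩, hsd⟩ := h
    have hcase : (r.1 < a.1 ∧ r.2 = a.2 ∧ s.1 = a.1 ∧ s.2 < a.2) ∨
        (r.1 = a.1 ∧ a.2 < r.2 ∧ a.1 < s.1 ∧ s.2 = a.2) := by
      have : ¬ (s.1 = d₁.1 ∧ s.2 = d₁.2) := fun h => hsd (Prod.ext h.1 h.2)
      grind
    rcases hcase with ⟨e1, e2, e3, e4⟩ | ⟨e1, e2, e3, e4⟩
    · obtain ⟨r', h1, h2, h3, h4⟩ := caseB C a d₁ r s haX hd1 hQ2 hd1strip e1 e2 e3 e4 hsd2 hrs hline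
      refine ⟨r', h1, ?_, ?_, h4⟩
      · rintro rfl; exact lt_irrefl _ h2
      · exact mul_pos_of_neg_of_neg (by linarith) (by linarith)
    · obtain ⟨r', h1, h2, h3, h4⟩ := caseB C' a d₁ r s haX (by grind) (by grind) (by grind)
        (by grind) (by grind) (by grind) (by grind) (by grind) hrs hline
      refine ⟨r', h1, ?_, ?_, h4⟩
      · rintro rfl; exact lt_irrefl _ h2
      · exact mul_pos (by linarith) (by linarith)
  · exfalso
    have hne : ¬ (r.1 = a.1 ∧ r.2 = a.2) := fun h => hra.1 (Prod.ext h.1.symm h.2.symm)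
    obtain ⟨h3, h4⟩ := h
    by_cases e : r.1 = a.1
    · exact caseA C a s r haX hrX hd1 hd1strip e (by grind) hrs1.2 hline
    · exact caseA C' a s r haX hrX (by grind) (by grind) (by grind) (by grind) (by grind) hline
end
end

section
/- Let X be a finite non-collinear set of points in ℝ² with the L1 metric. Suppose a ∈ X is not an endpoint of any arrow, the second and fourth quadrants of a are empty, and the first quadrant of a is not empty. Then: (i) the half-line {x(a)}×(y(a),∞) contains points of X; let r be such a point with y(r) minimal; (ii) the half-line (x(a),∞)×{y(a)} contains points of X; let s be such a point with x(s) minimal; (iii) (r,s) is a red arrow; (iv) there exists r' ∈ X with r' ≠ r such that {r,r'} is an increasing pair and (r',s) is a red arrow. -/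
noncomputable section
open Classical

namespace TwoRed

/-- `I`-comparability. -/
def CI (u v : ℝ × ℝ) : Prop := leI u v ∨ leI v u

/-- `D`-comparability. -/
def CD (u v : ℝ × ℝ) : Prop := leD u v ∨ leD v u

lemma abs_btw (a b c : ℝ) : |a - c| ≤ |a - b| + |b - c| ∧
    (|a - c| = |a - b| + |b - c| ↔ (a ≤ b ∧ b ≤ c) ∨ (c ≤ b ∧ b ≤ a)) := by
  refine ⟨abs_sub_le a b c, ?_, ?_⟩
  · intro h
    by_contra hn
    rcases abs_cases (a - c) with ⟨h1, h1'⟩ | ⟨h1, h1'⟩ <;>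
    rcases abs_cases (a - b) with ⟨h2, h2'⟩ | ⟨h2, h2'⟩ <;>
    rcases abs_cases (b - c) with ⟨h3, h3'⟩ | ⟨h3, h3'⟩ <;>
    first
      | (exact hn (Or.inl ⟨by linarith, by linarith⟩))
      | (exact hn (Or.inr ⟨by linarith, by linarith⟩))
  · rintro (⟨h1, h2⟩ | ⟨h1, h2⟩)
    · rw [abs_of_nonpos (by linarith), abs_of_nonpos (by linarith), abs_of_nonpos (by linarith)]
      ring
    · rw [abs_of_nonneg (by linarith), abs_of_nonneg (by linarith), abs_of_nonneg (by linarith)]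
      ring

lemma mbtw_iff (u z v : ℝ × ℝ) : MBtw u z v ↔ u ≠ z ∧ z ≠ v ∧ u ≠ v ∧
    ((u.1 ≤ z.1 ∧ z.1 ≤ v.1) ∨ (v.1 ≤ z.1 ∧ z.1 ≤ u.1)) ∧
    ((u.2 ≤ z.2 ∧ z.2 ≤ v.2) ∨ (v.2 ≤ z.2 ∧ z.2 ≤ u.2)) := by
  unfold MBtw rho
  have h1 := abs_btw u.1 z.1 v.1
  have h2 := abs_btw u.2 z.2 v.2
  rw [← h1.2, ← h2.2]
  refine and_congr_right fun _ => and_congr_right fun _ => and_congr_right fun _ => ?_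
  constructor
  · intro h
    constructor <;> linarith [h1.1, h2.1]
  · rintro ⟨h, h'⟩
    linarith

lemma mem_line_inc {X : Finset (ℝ × ℝ)} {u v z : ℝ × ℝ} (h1 : u.1 < v.1) (h2 : u.2 < v.2) :
    z ∈ lineThrough X u v ↔ z ∈ X ∧ CI z u ∧ CI z v := by
  unfold lineThrough CI leI
  simp only [Finset.mem_filter, mbtw_iff]
  refine and_congr_right fun _ => ?_
  obtain ⟨u1, u2⟩ := u
  obtain ⟨v1, v2⟩ := v
  obtain ⟨z1, z2⟩ := z
  simp only [Prod.mk.injEq, ne_eq] at *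
  grind

lemma mem_line_dec {X : Finset (ℝ × ℝ)} {u v z : ℝ × ℝ} (h1 : u.1 < v.1) (h2 : v.2 < u.2) :
    z ∈ lineThrough X u v ↔ z ∈ X ∧ CD z u ∧ CD z v := by
  unfold lineThrough CD leD
  simp only [Finset.mem_filter, mbtw_iff]
  refine and_congr_right fun _ => ?_
  obtain ⟨u1, u2⟩ := u
  obtain ⟨v1, v2⟩ := v
  obtain ⟨z1, z2⟩ := z
  simp only [Prod.mk.injEq, ne_eq] at *
  grind

lemma strip_h {X : Finset (ℝ × ℝ)} (hnc : NonCollinear X) {u v : ℝ × ℝ} (hu : u ∈ X) (hv : v ∈ X)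
    (h2 : u.2 = v.2) (h1 : u.1 < v.1) : ∃ z ∈ X, u.1 < z.1 ∧ z.1 < v.1 ∧ z.2 ≠ u.2 := by
  by_contra hn
  push Not at hn
  refine hnc u hu v hv (by rintro rfl; exact lt_irrefl _ h1) ?_
  unfold lineThrough
  rw [Finset.filter_eq_self]
  intro z hz
  have := hn z hz
  simp only [mbtw_iff]
  obtain ⟨u1, u2⟩ := u
  obtain ⟨v1, v2⟩ := v
  obtain ⟨z1, z2⟩ := z
  simp only [Prod.mk.injEq, ne_eq] at *
  grind

lemma strip_v {X : Finset (ℝ × ℝ)} (hnc : NonCollinear X) {u v : ℝ × ℝ} (hu : u ∈ X) (hv : v ∈ X)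
    (h2 : u.1 = v.1) (h1 : u.2 < v.2) : ∃ z ∈ X, u.2 < z.2 ∧ z.2 < v.2 ∧ z.1 ≠ u.1 := by
  by_contra hn
  push Not at hn
  refine hnc u hu v hv (by rintro rfl; exact lt_irrefl _ h1) ?_
  unfold lineThrough
  rw [Finset.filter_eq_self]
  intro z hz
  have := hn z hz
  simp only [mbtw_iff]
  obtain ⟨u1, u2⟩ := u
  obtain ⟨v1, v2⟩ := v
  obtain ⟨z1, z2⟩ := z
  simp only [Prod.mk.injEq, ne_eq] at *
  grind

lemma inc_lt {p q : ℝ × ℝ} (h : IncPair p q) (hl : ltI p q) : p.1 < q.1 ∧ p.2 < q.2 := by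
  unfold IncPair at h
  obtain ⟨⟨h1, h2⟩, -⟩ := hl
  constructor
  · refine lt_of_le_of_ne h1 fun e => ?_
    rw [e] at h; simp at h
  · refine lt_of_le_of_ne h2 fun e => ?_
    rw [e] at h; simp at h

lemma inc_of_lt {p q : ℝ × ℝ} (h1 : p.1 < q.1) (h2 : p.2 < q.2) : IncPair p q ∧ ltI p q := by
  refine ⟨mul_pos (by linarith) (by linarith), ⟨h1.le, h2.le⟩, ?_⟩
  rintro rfl; exact lt_irrefl _ h1

lemma dec_lt {p q : ℝ × ℝ} (h : DecPair p q) (hl : ltD p q) : p.1 < q.1 ∧ q.2 < p.2 := by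
  unfold DecPair at h
  obtain ⟨⟨h1, h2⟩, -⟩ := hl
  constructor
  · refine lt_of_le_of_ne h1 fun e => ?_
    rw [e] at h; simp at h
  · refine lt_of_le_of_ne h2 fun e => ?_
    rw [e] at h; simp at h

lemma dec_of_lt {p q : ℝ × ℝ} (h1 : p.1 < q.1) (h2 : q.2 < p.2) : DecPair p q ∧ ltD p q := by
  refine ⟨mul_neg_of_pos_of_neg (by linarith) (by linarith), ⟨h1.le, h2.le⟩, ?_⟩
  rintro rfl; exact lt_irrefl _ h1

lemma CI_eq_of_sum {u v : ℝ × ℝ} (h : CI u v) (hs : u.1 + u.2 ≤ v.1 + v.2) : leI u v := by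
  rcases h with h | ⟨h1, h2⟩
  · exact h
  · exact ⟨by linarith, by linarith⟩

/-- Every line induced by an increasing pair is induced by a blue arrow. -/
lemma exists_blue {X : Finset (ℝ × ℝ)} {u v : ℝ × ℝ} (hu : u ∈ X) (hv : v ∈ X)
    (h1 : u.1 < v.1) (h2 : u.2 < v.2) :
    ∃ p q, BlueArrow X p q ∧ lineThrough X u v = lineThrough X p q := by
  obtain ⟨⟨p, q⟩, hpq, hmin⟩ := Finset.exists_min_image
    ((X ×ˢ X).filter fun w => w.1.1 < w.2.1 ∧ w.1.2 < w.2.2 ∧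
      lineThrough X w.1 w.2 = lineThrough X u v)
    (fun w => (toLex (w.2.1 + w.2.2, -(w.1.1 + w.1.2)) : ℝ ×ₗ ℝ))
    ⟨(u, v), by simp [hu, hv, h1, h2]⟩
  simp only [Finset.mem_filter, Finset.mem_product] at hpq hmin
  obtain ⟨⟨hp, hq⟩, e1, e2, hl⟩ := hpq
  refine ⟨p, q, ⟨hp, hq, (inc_of_lt e1 e2).1, (inc_of_lt e1 e2).2, ?_⟩, hl.symm⟩
  intro c d hc hd hi hlt hcd
  obtain ⟨f1, f2⟩ := inc_lt hi hlt
  have hm := hmin (c, d) ⟨⟨hc, hd⟩, f1, f2, hcd.trans hl⟩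
  rw [Prod.Lex.le_iff] at hm
  simp only [ofLex_toLex] at hm
  have mc : c ∈ lineThrough X p q := by
    rw [← hcd, mem_line_inc f1 f2]; exact ⟨hc, Or.inl ⟨le_rfl, le_rfl⟩, Or.inl ⟨f1.le, f2.le⟩⟩
  have md : d ∈ lineThrough X p q := by
    rw [← hcd, mem_line_inc f1 f2]; exact ⟨hd, Or.inr ⟨f1.le, f2.le⟩, Or.inl ⟨le_rfl, le_rfl⟩⟩
  rw [mem_line_inc e1 e2] at mc md
  have hqd : leI q d := by
    refine CI_eq_of_sum (Or.symm md.2.2) ?_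
    rcases hm with h | h <;> linarith
  by_cases hqe : q = d
  · right
    refine ⟨hqe, CI_eq_of_sum mc.2.1 ?_⟩
    rcases hm with h | h
    · rw [hqe] at h; exact absurd h (lt_irrefl _)
    · linarith
  · exact Or.inl ⟨hqd, hqe⟩

lemma CI_base {a z : ℝ × ℝ} (h2 : ¬(z.1 < a.1 ∧ a.2 < z.2)) (h4 : ¬(a.1 < z.1 ∧ z.2 < a.2)) :
    leI z a ∨ leI a z := by
  unfold leI
  grind

lemma leI_trans {u v w : ℝ × ℝ} (h : leI u v) (h' : leI v w) : leI u w :=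
  ⟨h.1.trans h'.1, h.2.trans h'.2⟩

lemma leI_antisymm {u v : ℝ × ℝ} (h : leI u v) (h' : leI v u) : u = v :=
  Prod.ext (le_antisymm h.1 h'.1) (le_antisymm h.2 h'.2)

/-- `q` is on one of the two open half-axes of `a` bounding the first quadrant. -/
def Ax (a q : ℝ × ℝ) : Prop := (q.1 = a.1 ∧ a.2 < q.2) ∨ (q.2 = a.2 ∧ a.1 < q.1)

lemma ax_of {a q : ℝ × ℝ} (h : leI a q) (hne : a ≠ q) (hn : ¬ (a.1 < q.1 ∧ a.2 < q.2)) :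
    Ax a q := by
  obtain ⟨h1, h2⟩ := h
  obtain ⟨a1, a2⟩ := a
  obtain ⟨q1, q2⟩ := q
  unfold Ax
  simp only [Prod.mk.injEq, ne_eq] at *
  grind

lemma key {X : Finset (ℝ × ℝ)} {a : ℝ × ℝ}
    (hnc : NonCollinear X) (haX : a ∈ X) (hiso : NotEndpoint X a)
    (hQ2 : ∀ z ∈ X, ¬(z.1 < a.1 ∧ a.2 < z.2))
    (hQ4 : ∀ z ∈ X, ¬(a.1 < z.1 ∧ z.2 < a.2))
    {b : ℝ × ℝ} (hb : b ∈ X) (h1 : a.1 < b.1) (h2 : a.2 < b.2)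
    (hmin : ∀ z ∈ X, a.1 < z.1 → a.2 < z.2 → leI z b → z = b) :
    (∃ q ∈ X, Ax a q ∧ leI q b ∧ ∀ z ∈ X, CI z q ↔ CI z b) ∨
    (∃ p ∈ X, Ax a p ∧ p.1 < b.1 ∧ p.2 < b.2) := by
  obtain ⟨p, q, hA, hl⟩ := exists_blue haX hb h1 h2
  obtain ⟨nap, naq⟩ := hiso p q (Or.inl hA)
  obtain ⟨hp, hq, hi, hlt, hA⟩ := hA
  obtain ⟨e1, e2⟩ := inc_lt hi hlt
  have hca : ∀ z ∈ X, leI z a ∨ leI a z := fun z hz => CI_base (hQ2 z hz) (hQ4 z hz)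
  have L : ∀ z ∈ X, (CI z p ∧ CI z q ↔ CI z b) := by
    intro z hz
    have := Finset.ext_iff.1 hl z
    rw [mem_line_inc h1 h2, mem_line_inc e1 e2] at this
    have hz' : CI z a := hca z hz
    exact ⟨fun h => (this.2 ⟨hz, h⟩).2.2, fun h => (this.1 ⟨hz, hz', h⟩).2⟩
  have hab : leI a b := ⟨h1.le, h2.le⟩
  have hpq : leI p q := ⟨e1.le, e2.le⟩
  have low : ∀ z ∈ X, leI z a → CI z p ∧ CI z q := fun z hz h =>
    (L z hz).2 (Or.inl (leI_trans h hab))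
  have hqb : leI q b := by
    rcases hA a b haX hb (inc_of_lt h1 h2).1 (inc_of_lt h1 h2).2 hl with h | h
    · exact h.1
    · rw [h.1]; exact ⟨le_rfl, le_rfl⟩
  rcases hca q hq with hqa | haq
  · exfalso
    refine hnc p hp q hq hlt.2 ?_
    ext z
    rw [mem_line_inc e1 e2]
    refine ⟨fun h => h.1, fun hz => ⟨hz, ?_⟩⟩
    rcases hca z hz with h | h
    · exact low z hz h
    · exact ⟨Or.inr (leI_trans hpq (leI_trans hqa h)), Or.inr (leI_trans hqa h)⟩
  rcases hca p hp with hpa | hap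
  · have allp : ∀ z ∈ X, CI z p := by
      intro z hz
      rcases hca z hz with h | h
      · exact (low z hz h).1
      · exact Or.inr (leI_trans hpa h)
    by_cases hq1 : a.1 < q.1 ∧ a.2 < q.2
    · exfalso
      have hlq : lineThrough X a q = lineThrough X p q := by
        ext z
        rw [mem_line_inc hq1.1 hq1.2, mem_line_inc e1 e2]
        refine and_congr_right fun hz => ?_
        have h3 := allp z hz
        have h4 : CI z a := hca z hz
        tauto
      rcases hA a q haX hq (inc_of_lt hq1.1 hq1.2).1 (inc_of_lt hq1.1 hq1.2).2 hlq with h | h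
      · exact h.2 rfl
      · exact nap (leI_antisymm h.2 hpa)
    · left
      refine ⟨q, hq, ax_of haq naq hq1, hqb, fun z hz => ?_⟩
      rw [← L z hz]
      exact ⟨fun h => ⟨allp z hz, h⟩, And.right⟩
  · right
    have hqe : q = b := hmin q hq (lt_of_le_of_lt hap.1 e1) (lt_of_le_of_lt hap.2 e2) hqb
    subst hqe
    refine ⟨p, hp, ax_of hap nap fun h => ?_, e1, e2⟩
    exact hlt.2 (hmin p hp h.1 h.2 hpq)


lemma key1 {X : Finset (ℝ × ℝ)} {a : ℝ × ℝ}
    (hnc : NonCollinear X) (haX : a ∈ X) (hiso : NotEndpoint X a)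
    (hQ2 : ∀ z ∈ X, ¬(z.1 < a.1 ∧ a.2 < z.2))
    (hQ4 : ∀ z ∈ X, ¬(a.1 < z.1 ∧ z.2 < a.2))
    {b : ℝ × ℝ} (hb : b ∈ X) (h1 : a.1 < b.1) (h2 : a.2 < b.2)
    (hmin : ∀ z ∈ X, a.1 < z.1 → a.2 < z.2 → z.1 ≤ b.1 → z.2 ≤ b.2 → z = b) :
    (∃ q ∈ X, ((q.1 = a.1 ∧ a.2 < q.2) ∨ (q.2 = a.2 ∧ a.1 < q.1)) ∧
      q.1 ≤ b.1 ∧ q.2 ≤ b.2 ∧ ∀ z ∈ X, CI z q ↔ CI z b) ∨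
    (∃ q ∈ X, ((q.1 = a.1 ∧ a.2 < q.2) ∨ (q.2 = a.2 ∧ a.1 < q.1)) ∧ q.1 < b.1 ∧ q.2 < b.2) := by
  have hk := key hnc haX hiso hQ2 hQ4 hb (by assumption) (by assumption)
    (fun z hz _ _ h => by obtain ⟨_, _⟩ := h; apply hmin z hz <;> assumption)
  unfold Ax leI at hk
  rcases hk with ⟨q, hq, ha, ⟨_, _⟩, hc⟩ | ⟨q, hq, ha, _, _⟩
  · exact Or.inl ⟨q, hq, by tauto, by assumption, by assumption, hc⟩
  · exact Or.inr ⟨q, hq, by tauto, by assumption, by assumption⟩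

lemma lex1 {S : Finset (ℝ × ℝ)} (hS : S.Nonempty) :
    ∃ b ∈ S, ∀ z ∈ S, b.1 < z.1 ∨ (b.1 = z.1 ∧ b.2 ≤ z.2) := by
  obtain ⟨b, hb, h⟩ := Finset.exists_min_image S (fun w => (toLex (w.1, w.2) : ℝ ×ₗ ℝ)) hS
  refine ⟨b, hb, fun z hz => ?_⟩
  have := h z hz
  rw [Prod.Lex.le_iff] at this
  exact this

/-- There is a point on the first half-axis. -/
lemma up1 {X : Finset (ℝ × ℝ)} {a : ℝ × ℝ}
    (hnc : NonCollinear X) (haX : a ∈ X) (hiso : NotEndpoint X a)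
    (hQ2 : ∀ z ∈ X, ¬(z.1 < a.1 ∧ a.2 < z.2))
    (hQ4 : ∀ z ∈ X, ¬(a.1 < z.1 ∧ z.2 < a.2))
    (hQ1 : ∃ z ∈ X, a.1 < z.1 ∧ a.2 < z.2) : ∃ z ∈ X, z.1 = a.1 ∧ a.2 < z.2 := by
  by_contra hn
  push Not at hn
  obtain ⟨b, hb, hbm⟩ := lex1 (S := X.filter fun z => a.1 < z.1 ∧ a.2 < z.2)
    (by
      obtain ⟨z, hz, _, _⟩ := hQ1
      exact ⟨z, Finset.mem_filter.2 ⟨hz, by assumption, by assumption⟩⟩)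
  simp only [Finset.mem_filter] at hb hbm
  have fin : ∀ q ∈ X, ((q.1 = a.1 ∧ a.2 < q.2) ∨ (q.2 = a.2 ∧ a.1 < q.1)) → q.1 ≤ b.1 → q.2 ≤ b.2 → False := by
    intro q hq hax hle hle'
    have hax : q.2 = a.2 ∧ a.1 < q.1 := by
      have := hn q hq
      grind
    obtain ⟨z, hz, z1, z2, z3⟩ := strip_h hnc haX hq hax.1.symm hax.2
    have := hbm z
    have := hQ4 z hz
    have := hQ2 z hz
    grind
  have hm : ∀ z ∈ X, a.1 < z.1 → a.2 < z.2 → z.1 ≤ b.1 → z.2 ≤ b.2 → z = b := by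
    intro z hz h1 h2 h3 h4
    have := hbm z ⟨hz, h1, h2⟩
    exact Prod.ext (by grind) (by grind)
  obtain ⟨hbX, b1, b2⟩ := hb
  rcases key1 hnc haX hiso hQ2 hQ4 hbX b1 b2 hm with ⟨q, hq, ha, hl, hl', -⟩ | ⟨q, hq, ha, hl, hl'⟩
  · exact fin q hq ha hl hl'
  · exact fin q hq ha hl.le hl'.le

lemma box1 {X : Finset (ℝ × ℝ)} {a : ℝ × ℝ}
    (hnc : NonCollinear X) (haX : a ∈ X) (hiso : NotEndpoint X a)
    (hQ2 : ∀ z ∈ X, ¬(z.1 < a.1 ∧ a.2 < z.2))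
    (hQ4 : ∀ z ∈ X, ¬(a.1 < z.1 ∧ z.2 < a.2))
    {r s : ℝ × ℝ}
    (hr : r ∈ X ∧ r.1 = a.1 ∧ a.2 < r.2 ∧ ∀ z ∈ X, z.1 = a.1 → a.2 < z.2 → r.2 ≤ z.2)
    (hs : s ∈ X ∧ s.2 = a.2 ∧ a.1 < s.1 ∧ ∀ z ∈ X, z.2 = a.2 → a.1 < z.1 → s.1 ≤ z.1) :
    ∀ z ∈ X, a.1 < z.1 → z.1 < s.1 → a.2 < z.2 → z.2 ≤ r.2 → False := by
  intro w hw w1 w2 w3 w4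
  obtain ⟨b, hb, hbm⟩ := lex1 (S := X.filter fun z => a.1 < z.1 ∧ z.1 < s.1 ∧ a.2 < z.2 ∧ z.2 ≤ r.2)
    ⟨w, Finset.mem_filter.2 ⟨hw, w1, w2, w3, w4⟩⟩
  simp only [Finset.mem_filter] at hb hbm
  obtain ⟨hbX, b1, b2, b3, b4⟩ := hb
  obtain ⟨hrX, r1, r2, hrm⟩ := hr
  obtain ⟨hsX, s1, s2, hsm⟩ := hs
  have hm : ∀ z ∈ X, a.1 < z.1 → a.2 < z.2 → z.1 ≤ b.1 → z.2 ≤ b.2 → z = b := by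
    intro z hz h1 h2 h31 h32
    have := hbm z ⟨hz, h1, by linarith, h2, by linarith⟩
    exact Prod.ext (by grind) (by grind)
  rcases key1 hnc haX hiso hQ2 hQ4 hbX b1 b3 hm with ⟨q, hq, ha, hl, hl2, hc⟩ | ⟨q, hq, ha, hl, hl'⟩
  · have hq1 : q.1 = a.1 ∧ a.2 < q.2 := by
      rcases ha with h | h
      · exact h
      · have := hsm q hq h.1 h.2
        linarith
    have hle := hrm q hq hq1.1 hq1.2
    have hrb : r.2 = b.2 := by linarith
    obtain ⟨z, hz, z1, z2, z3⟩ := strip_h hnc hrX hbX hrb (by rw [r1]; exact b1)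
    have h1 := hc z hz
    have h2 := hQ4 z hz
    have h2' := hQ2 z hz
    have h3 := hsm z hz
    have h4 := hbm z
    have hz2 : r.2 < z.2 := by grind
    have h5 : CI z b := h1.1 (Or.inr ⟨by linarith, by linarith⟩)
    rcases h5 with h | h
    · obtain ⟨h, h'⟩ := h; linarith
    · obtain ⟨h, h'⟩ := h; linarith
  · rcases ha with h | h
    · have := hrm q hq h.1 h.2
      linarith
    · have := hsm q hq h.1 h.2
      linarith

lemma key2 {X : Finset (ℝ × ℝ)} {a : ℝ × ℝ}
    (hnc : NonCollinear X) (haX : a ∈ X) (hiso : NotEndpoint X a)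
    (hQ2 : ∀ z ∈ X, ¬(z.1 < a.1 ∧ a.2 < z.2))
    (hQ4 : ∀ z ∈ X, ¬(a.1 < z.1 ∧ z.2 < a.2))
    {b : ℝ × ℝ} (hb : b ∈ X) (h1 : a.2 < b.2) (h2 : a.1 < b.1)
    (hmin : ∀ z ∈ X, a.2 < z.2 → a.1 < z.1 → z.2 ≤ b.2 → z.1 ≤ b.1 → z = b) :
    (∃ q ∈ X, ((q.2 = a.2 ∧ a.1 < q.1) ∨ (q.1 = a.1 ∧ a.2 < q.2)) ∧
      q.2 ≤ b.2 ∧ q.1 ≤ b.1 ∧ ∀ z ∈ X, CI z q ↔ CI z b) ∨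
    (∃ q ∈ X, ((q.2 = a.2 ∧ a.1 < q.1) ∨ (q.1 = a.1 ∧ a.2 < q.2)) ∧ q.2 < b.2 ∧ q.1 < b.1) := by
  have hk := key hnc haX hiso hQ2 hQ4 hb (by assumption) (by assumption)
    (fun z hz _ _ h => by obtain ⟨_, _⟩ := h; apply hmin z hz <;> assumption)
  unfold Ax leI at hk
  rcases hk with ⟨q, hq, ha, ⟨_, _⟩, hc⟩ | ⟨q, hq, ha, _, _⟩
  · exact Or.inl ⟨q, hq, by tauto, by assumption, by assumption, hc⟩
  · exact Or.inr ⟨q, hq, by tauto, by assumption, by assumption⟩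

lemma lex2 {S : Finset (ℝ × ℝ)} (hS : S.Nonempty) :
    ∃ b ∈ S, ∀ z ∈ S, b.2 < z.2 ∨ (b.2 = z.2 ∧ b.1 ≤ z.1) := by
  obtain ⟨b, hb, h⟩ := Finset.exists_min_image S (fun w => (toLex (w.2, w.1) : ℝ ×ₗ ℝ)) hS
  refine ⟨b, hb, fun z hz => ?_⟩
  have := h z hz
  rw [Prod.Lex.le_iff] at this
  exact this

/-- There is a point on the second half-axis. -/
lemma up2 {X : Finset (ℝ × ℝ)} {a : ℝ × ℝ}
    (hnc : NonCollinear X) (haX : a ∈ X) (hiso : NotEndpoint X a)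
    (hQ2 : ∀ z ∈ X, ¬(z.1 < a.1 ∧ a.2 < z.2))
    (hQ4 : ∀ z ∈ X, ¬(a.1 < z.1 ∧ z.2 < a.2))
    (hQ1 : ∃ z ∈ X, a.1 < z.1 ∧ a.2 < z.2) : ∃ z ∈ X, z.2 = a.2 ∧ a.1 < z.1 := by
  by_contra hn
  push Not at hn
  obtain ⟨b, hb, hbm⟩ := lex2 (S := X.filter fun z => a.2 < z.2 ∧ a.1 < z.1)
    (by
      obtain ⟨z, hz, _, _⟩ := hQ1
      exact ⟨z, Finset.mem_filter.2 ⟨hz, by assumption, by assumption⟩⟩)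
  simp only [Finset.mem_filter] at hb hbm
  have fin : ∀ q ∈ X, ((q.2 = a.2 ∧ a.1 < q.1) ∨ (q.1 = a.1 ∧ a.2 < q.2)) → q.2 ≤ b.2 → q.1 ≤ b.1 → False := by
    intro q hq hax hle hle'
    have hax : q.1 = a.1 ∧ a.2 < q.2 := by
      have := hn q hq
      grind
    obtain ⟨z, hz, z1, z2, z3⟩ := strip_v hnc haX hq hax.1.symm hax.2
    have := hbm z
    have := hQ4 z hz
    have := hQ2 z hz
    grind
  have hm : ∀ z ∈ X, a.2 < z.2 → a.1 < z.1 → z.2 ≤ b.2 → z.1 ≤ b.1 → z = b := by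
    intro z hz h1 h2 h3 h4
    have := hbm z ⟨hz, h1, h2⟩
    exact Prod.ext (by grind) (by grind)
  obtain ⟨hbX, b1, b2⟩ := hb
  rcases key2 hnc haX hiso hQ2 hQ4 hbX b1 b2 hm with ⟨q, hq, ha, hl, hl', -⟩ | ⟨q, hq, ha, hl, hl'⟩
  · exact fin q hq ha hl hl'
  · exact fin q hq ha hl.le hl'.le

lemma box2 {X : Finset (ℝ × ℝ)} {a : ℝ × ℝ}
    (hnc : NonCollinear X) (haX : a ∈ X) (hiso : NotEndpoint X a)
    (hQ2 : ∀ z ∈ X, ¬(z.1 < a.1 ∧ a.2 < z.2))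
    (hQ4 : ∀ z ∈ X, ¬(a.1 < z.1 ∧ z.2 < a.2))
    {r s : ℝ × ℝ}
    (hr : r ∈ X ∧ r.1 = a.1 ∧ a.2 < r.2 ∧ ∀ z ∈ X, z.1 = a.1 → a.2 < z.2 → r.2 ≤ z.2)
    (hs : s ∈ X ∧ s.2 = a.2 ∧ a.1 < s.1 ∧ ∀ z ∈ X, z.2 = a.2 → a.1 < z.1 → s.1 ≤ z.1) :
    ∀ z ∈ X, a.2 < z.2 → z.2 < r.2 → a.1 < z.1 → z.1 ≤ s.1 → False := by
  intro w hw w1 w2 w3 w4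
  obtain ⟨b, hb, hbm⟩ := lex2 (S := X.filter fun z => a.2 < z.2 ∧ z.2 < r.2 ∧ a.1 < z.1 ∧ z.1 ≤ s.1)
    ⟨w, Finset.mem_filter.2 ⟨hw, w1, w2, w3, w4⟩⟩
  simp only [Finset.mem_filter] at hb hbm
  obtain ⟨hbX, b1, b2, b3, b4⟩ := hb
  obtain ⟨hsX, s1, s2, hsm⟩ := hs
  obtain ⟨hrX, r1, r2, hrm⟩ := hr
  have hm : ∀ z ∈ X, a.2 < z.2 → a.1 < z.1 → z.2 ≤ b.2 → z.1 ≤ b.1 → z = b := by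
    intro z hz h1 h2 h31 h32
    have := hbm z ⟨hz, h1, by linarith, h2, by linarith⟩
    exact Prod.ext (by grind) (by grind)
  rcases key2 hnc haX hiso hQ2 hQ4 hbX b1 b3 hm with ⟨q, hq, ha, hl, hl2, hc⟩ | ⟨q, hq, ha, hl, hl'⟩
  · have hq1 : q.2 = a.2 ∧ a.1 < q.1 := by
      rcases ha with h | h
      · exact h
      · have := hrm q hq h.1 h.2
        linarith
    have hle := hsm q hq hq1.1 hq1.2
    have hrb : s.1 = b.1 := by linarith
    obtain ⟨z, hz, z1, z2, z3⟩ := strip_v hnc hsX hbX hrb (by rw [s1]; exact b1)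
    have h1 := hc z hz
    have h2 := hQ4 z hz
    have h2' := hQ2 z hz
    have h3 := hrm z hz
    have h4 := hbm z
    have hz2 : s.1 < z.1 := by grind
    have h5 : CI z b := h1.1 (Or.inr ⟨by linarith, by linarith⟩)
    rcases h5 with h | h
    · obtain ⟨h, h'⟩ := h; linarith
    · obtain ⟨h, h'⟩ := h; linarith
  · rcases ha with h | h
    · have := hsm q hq h.1 h.2
      linarith
    · have := hrm q hq h.1 h.2
      linarith

end TwoRed

open TwoRed in
/-- If `a` is not an endpoint of any arrow, its second and fourth quadrants are
empty and its first quadrant is not, then there are points of `X` directly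
above `a` and directly to the right of `a`; the closest point `r` above `a` and
the closest point `s` to the right of `a` form a red arrow `(r,s)`, and there
is another red arrow `(r',s)` with `r' ≠ r` and `{r,r'}` an increasing pair. -/
theorem two_red_arrows_two_empty_quadrants (X : Finset (ℝ × ℝ)) (a : ℝ × ℝ)
    (hnc : NonCollinear X) (haX : a ∈ X) (hiso : NotEndpoint X a)
    (hQ2 : ∀ z ∈ X, ¬(z.1 < a.1 ∧ a.2 < z.2))
    (hQ4 : ∀ z ∈ X, ¬(a.1 < z.1 ∧ z.2 < a.2))
    (hQ1 : ∃ z ∈ X, a.1 < z.1 ∧ a.2 < z.2) :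
    (∃ z ∈ X, z.1 = a.1 ∧ a.2 < z.2) ∧
    (∃ z ∈ X, z.2 = a.2 ∧ a.1 < z.1) ∧
    ∀ r s : ℝ × ℝ,
      (r ∈ X ∧ r.1 = a.1 ∧ a.2 < r.2 ∧ ∀ z ∈ X, z.1 = a.1 → a.2 < z.2 → r.2 ≤ z.2) →
      (s ∈ X ∧ s.2 = a.2 ∧ a.1 < s.1 ∧ ∀ z ∈ X, z.2 = a.2 → a.1 < z.1 → s.1 ≤ z.1) →
      RedArrow X r s ∧
        ∃ r' ∈ X, r' ≠ r ∧ IncPair r r' ∧ RedArrow X r' s := by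
  refine ⟨up1 hnc haX hiso hQ2 hQ4 hQ1, up2 hnc haX hiso hQ2 hQ4 hQ1, ?_⟩
  intro r s hr hs
  have B1 := box1 hnc haX hiso hQ2 hQ4 hr hs
  have B2 := box2 hnc haX hiso hQ2 hQ4 hr hs
  obtain ⟨hrX, r1, r2, hrm⟩ := hr
  obtain ⟨hsX, s1, s2, hsm⟩ := hs
  obtain ⟨w, hw, w1, w2, w3⟩ := strip_h hnc haX hsX s1.symm s2
  obtain ⟨t, ht, t1, t2, t3⟩ := strip_v hnc haX hrX r1.symm r2
  have w4 : r.2 < w.2 := by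
    have := B1 w hw w1 w2
    have := hQ4 w hw
    grind
  have t4 : s.1 < t.1 := by
    have := B2 t ht
    have := hQ2 t ht
    grind
  constructor
  · have e1 : r.1 < s.1 := by linarith
    have e2 : s.2 < r.2 := by linarith
    refine ⟨hrX, hsX, (dec_of_lt e1 e2).1, (dec_of_lt e1 e2).2, ?_⟩
    intro c d hc hd hdec hlt hl
    obtain ⟨f1, f2⟩ := dec_lt hdec hlt
    have ma : a ∈ lineThrough X c d := by
      rw [hl, mem_line_dec e1 e2]
      exact ⟨haX, Or.inr ⟨r1.le, r2.le⟩, Or.inl ⟨s2.le, s1.le⟩⟩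
    have mc : c ∈ lineThrough X r s := by
      rw [← hl, mem_line_dec f1 f2]
      exact ⟨hc, Or.inl ⟨le_rfl, le_rfl⟩, Or.inl ⟨f1.le, f2.le⟩⟩
    rw [mem_line_dec f1 f2] at ma
    rw [mem_line_dec e1 e2] at mc
    obtain ⟨-, ma1, ma2⟩ := ma
    obtain ⟨-, mc1, mc2⟩ := mc
    have c2 := hQ2 c hc
    have c4 := hQ4 c hc
    have d2 := hQ2 d hd
    have d4 := hQ4 d hd
    unfold CD leD at ma1 ma2 mc1 mc2
    have hc1 : c.1 = a.1 ∧ a.2 < c.2 := by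
      constructor <;> grind
    have hd1 : d.2 = a.2 ∧ a.1 < d.1 := by
      constructor <;> grind
    have hh1 := hrm c hc hc1.1 hc1.2
    have hh2 := hsm d hd hd1.1 hd1.2
    by_cases he : s = d
    · exact Or.inr ⟨he, by rw [hc1.1, r1], hh1⟩
    · exact Or.inl ⟨⟨hh2, by rw [hd1.1, s1]⟩, he⟩
  · obtain ⟨r', hr', hmax⟩ := Finset.exists_max_image
      (X.filter fun z => a.1 < z.1 ∧ z.1 < s.1 ∧ r.2 < z.2) (fun z => z.1 - z.2)
      ⟨w, Finset.mem_filter.2 ⟨hw, w1, w2, w4⟩⟩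
    simp only [Finset.mem_filter] at hr' hmax
    obtain ⟨hrX', g1, g2, g3⟩ := hr'
    refine ⟨r', hrX', ?_, (inc_of_lt (by linarith) g3).1, ?_⟩
    · rintro rfl; exact lt_irrefl _ g3
    have e2 : s.2 < r'.2 := by linarith
    refine ⟨hrX', hsX, (dec_of_lt g2 e2).1, (dec_of_lt g2 e2).2, ?_⟩
    intro c d hc hd hdec hlt hl
    obtain ⟨f1, f2⟩ := dec_lt hdec hlt
    have mc : c ∈ lineThrough X r' s := by
      rw [← hl, mem_line_dec f1 f2]
      exact ⟨hc, Or.inl ⟨le_rfl, le_rfl⟩, Or.inl ⟨f1.le, f2.le⟩⟩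
    have md : d ∈ lineThrough X r' s := by
      rw [← hl, mem_line_dec f1 f2]
      exact ⟨hd, Or.inr ⟨f1.le, f2.le⟩, Or.inl ⟨le_rfl, le_rfl⟩⟩
    have mt : t ∉ lineThrough X c d := by
      rw [hl, mem_line_dec g2 e2]
      rintro ⟨-, -, h | h⟩
      · have := h.1; linarith
      · have := h.2; linarith
    rw [mem_line_dec f1 f2] at mt
    rw [mem_line_dec g2 e2] at mc md
    obtain ⟨-, mc1, mc2⟩ := mc
    obtain ⟨-, md1, md2⟩ := md
    have c2 := hQ2 c hc
    by_cases he : s = d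
    · right
      refine ⟨he, ?_⟩
      rcases mc1 with h | ⟨h, h'⟩
      · exact h
      · subst he
        have hb := B1 c hc (by linarith) f1 (by linarith)
        have hm := hmax c ⟨hc, by linarith, f1, not_le.1 hb⟩
        exact ⟨by linarith, by linarith⟩
    · left
      refine ⟨?_, he⟩
      rcases md2 with ⟨h, h'⟩ | h
      · exfalso
        have hc1 : a.1 ≤ c.1 := by
          by_contra hh
          exact c2 ⟨by linarith, by linarith⟩
        have hd2 : a.2 < d.2 := by
          refine lt_of_le_of_ne (by linarith) fun e => he ?_
          have := hsm d hd e.symm (by linarith)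
          exact Prod.ext (by linarith) (by linarith)
        have hb : r.2 ≤ d.2 := by
          by_contra hh
          exact B2 d hd hd2 (by linarith) (by linarith) h
        exact mt ⟨ht, Or.inr ⟨by linarith, by linarith⟩, Or.inr ⟨by linarith, by linarith⟩⟩
      · exact h
end
end

section
/- Let X be a finite set of points in ℝ² with the L1 metric. If {p,q} is an increasing pair of points of X, {a,b} is a decreasing pair of points of X, and ⟨p,q⟩ = ⟨a,b⟩, then p, q, a, b are four distinct points that are the corners of an axis-parallel rectangle with {p,q} and {a,b} the two diagonal pairs; that is, {x(p),x(q)} = {x(a),x(b)} and {y(p),y(q)} = {y(a),y(b)}. -/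
noncomputable section
open Classical

theorem btw_coord {u z v : ℝ × ℝ} (h : MBtw u z v) :
    ((u.1 ≤ z.1 ∧ z.1 ≤ v.1) ∨ (v.1 ≤ z.1 ∧ z.1 ≤ u.1)) ∧
    ((u.2 ≤ z.2 ∧ z.2 ≤ v.2) ∨ (v.2 ≤ z.2 ∧ z.2 ≤ u.2)) := by
  obtain ⟨-, -, -, h⟩ := h
  unfold rho at h
  have key : ∀ r s t : ℝ, |r - t| = |r - s| + |s - t| →
      (r ≤ s ∧ s ≤ t) ∨ (t ≤ s ∧ s ≤ r) := by
    intro r s t hr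
    by_contra hc
    rcases abs_cases (r - t) with h1 | h1 <;> rcases abs_cases (r - s) with h2 | h2 <;>
      rcases abs_cases (s - t) with h3 | h3 <;> apply hc <;>
      first
      | exact Or.inl ⟨by linarith, by linarith⟩
      | exact Or.inr ⟨by linarith, by linarith⟩
  have h1 := abs_sub_le u.1 z.1 v.1
  have h2 := abs_sub_le u.2 z.2 v.2
  exact ⟨key _ _ _ (by linarith), key _ _ _ (by linarith)⟩

theorem line_inc {X : Finset (ℝ × ℝ)} {p q z : ℝ × ℝ} (h1 : p.1 < q.1) (h2 : p.2 < q.2)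
    (hz : z ∈ lineThrough X p q) :
    (z.1 ≤ p.1 ∧ z.2 ≤ p.2) ∨ (p.1 ≤ z.1 ∧ z.1 ≤ q.1 ∧ p.2 ≤ z.2 ∧ z.2 ≤ q.2) ∨
    (q.1 ≤ z.1 ∧ q.2 ≤ z.2) := by
  have hz := (Finset.mem_filter.1 hz).2
  rcases hz with rfl | rfl | h | h | h
  · exact Or.inl ⟨le_rfl, le_rfl⟩
  · exact Or.inr (Or.inr ⟨le_rfl, le_rfl⟩)
  all_goals
    have := btw_coord h
    grind

theorem line_dec {X : Finset (ℝ × ℝ)} {a b z : ℝ × ℝ} (h1 : a.1 < b.1) (h2 : b.2 < a.2)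
    (hz : z ∈ lineThrough X a b) :
    (z.1 ≤ a.1 ∧ a.2 ≤ z.2) ∨ (a.1 ≤ z.1 ∧ z.1 ≤ b.1 ∧ b.2 ≤ z.2 ∧ z.2 ≤ a.2) ∨
    (b.1 ≤ z.1 ∧ z.2 ≤ b.2) := by
  have hz := (Finset.mem_filter.1 hz).2
  rcases hz with rfl | rfl | h | h | h
  · exact Or.inl ⟨le_rfl, le_rfl⟩
  · exact Or.inr (Or.inr ⟨le_rfl, le_rfl⟩)
  all_goals
    have := btw_coord h
    grind

theorem line_left {X : Finset (ℝ × ℝ)} {a b : ℝ × ℝ} (h : a ∈ X) : a ∈ lineThrough X a b :=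
  Finset.mem_filter.2 ⟨h, Or.inl rfl⟩

theorem line_right {X : Finset (ℝ × ℝ)} {a b : ℝ × ℝ} (h : b ∈ X) : b ∈ lineThrough X a b :=
  Finset.mem_filter.2 ⟨h, Or.inr (Or.inl rfl)⟩

theorem btw_symm {u z v : ℝ × ℝ} (h : MBtw u z v) : MBtw v z u := by
  obtain ⟨h1, h2, h3, h4⟩ := h
  refine ⟨h2.symm, h1.symm, h3.symm, ?_⟩
  unfold rho at *
  rw [abs_sub_comm v.1 u.1, abs_sub_comm v.2 u.2, abs_sub_comm v.1 z.1, abs_sub_comm v.2 z.2,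
    abs_sub_comm z.1 u.1, abs_sub_comm z.2 u.2]
  linarith

theorem line_symm (X : Finset (ℝ × ℝ)) (a b : ℝ × ℝ) :
    lineThrough X a b = lineThrough X b a := by
  unfold lineThrough
  apply Finset.filter_congr
  intro z _
  have h1 : ∀ u z v, MBtw u z v ↔ MBtw v z u := fun u z v => ⟨btw_symm, btw_symm⟩
  rw [h1 a z b, h1 z a b, h1 a b z]
  tauto

theorem rect_core (X : Finset (ℝ × ℝ)) (p q a b : ℝ × ℝ)
    (hp : p ∈ X) (hq : q ∈ X) (ha : a ∈ X) (hb : b ∈ X)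
    (h1 : p.1 < q.1) (h2 : p.2 < q.2) (h3 : a.1 < b.1) (h4 : b.2 < a.2)
    (hl : lineThrough X p q = lineThrough X a b) :
    p.1 = a.1 ∧ p.2 = b.2 ∧ q.1 = b.1 ∧ q.2 = a.2 := by
  have A := line_inc h1 h2 (hl ▸ line_left ha)
  have B := line_inc h1 h2 (hl ▸ line_right hb)
  have P := line_dec h3 h4 (hl ▸ line_left hp)
  have Q := line_dec h3 h4 (hl ▸ line_right hq)
  rcases A with A | A | A <;> rcases B with B | B | B <;> rcases P with P | P | P <;>
    rcases Q with Q | Q | Q <;> first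
    | (exfalso; linarith)
    | (refine ⟨?_, ?_, ?_, ?_⟩ <;> linarith)

theorem rect_core2 (X : Finset (ℝ × ℝ)) (p q a b : ℝ × ℝ)
    (hp : p ∈ X) (hq : q ∈ X) (ha : a ∈ X) (hb : b ∈ X)
    (h1 : p.1 < q.1) (h2 : p.2 < q.2) (hab : DecPair a b)
    (hl : lineThrough X p q = lineThrough X a b) :
    a.1 ≠ b.1 ∧ a.2 ≠ b.2 ∧
    ((p.1 = a.1 ∧ p.2 = b.2 ∧ q.1 = b.1 ∧ q.2 = a.2) ∨
    (p.1 = b.1 ∧ p.2 = a.2 ∧ q.1 = a.1 ∧ q.2 = b.2)) := by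
  rcases mul_neg_iff.1 hab with ⟨h3, h4⟩ | ⟨h3, h4⟩
  · exact ⟨by grind, by grind,
      Or.inl (rect_core X p q a b hp hq ha hb h1 h2 (by linarith) (by linarith) hl)⟩
  · exact ⟨by grind, by grind,
      Or.inr (rect_core X p q b a hp hq hb ha h1 h2 (by linarith) (by linarith)
        (hl.trans (line_symm X a b)))⟩

/-- If an increasing pair and a decreasing pair of points of `X` induce the
same line, then the four points are distinct and are the corners of an
axis-parallel rectangle, the two pairs being its diagonals. -/
theorem inc_dec_same_line_rectangle (X : Finset (ℝ × ℝ)) (p q a b : ℝ × ℝ)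
    (hp : p ∈ X) (hq : q ∈ X) (ha : a ∈ X) (hb : b ∈ X)
    (hpq : IncPair p q) (hab : DecPair a b)
    (hline : lineThrough X p q = lineThrough X a b) :
    p ≠ q ∧ p ≠ a ∧ p ≠ b ∧ q ≠ a ∧ q ≠ b ∧ a ≠ b ∧
    ({p.1, q.1} : Set ℝ) = {a.1, b.1} ∧ ({p.2, q.2} : Set ℝ) = {a.2, b.2} := by
  have key : a.1 ≠ b.1 ∧ a.2 ≠ b.2 ∧
      ((p.1 = a.1 ∧ p.2 = b.2 ∧ q.1 = b.1 ∧ q.2 = a.2) ∨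
      (p.1 = b.1 ∧ p.2 = a.2 ∧ q.1 = a.1 ∧ q.2 = b.2)) := by
    rcases mul_pos_iff.1 hpq with ⟨h3, h4⟩ | ⟨h3, h4⟩
    · exact rect_core2 X p q a b hp hq ha hb (by linarith) (by linarith) hab hline
    · have := rect_core2 X q p a b hq hp ha hb (by linarith) (by linarith) hab
        ((line_symm X q p).trans hline)
      tauto
  obtain ⟨n1, n2, key⟩ := key
  refine ⟨?_, ?_, ?_, ?_, ?_, ?_, ?_, ?_⟩
  iterate 6
    · rintro rfl
      rcases key with ⟨k1, k2, k3, k4⟩ | ⟨k1, k2, k3, k4⟩ <;> simp_all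
  · rcases key with ⟨k1, k2, k3, k4⟩ | ⟨k1, k2, k3, k4⟩ <;> rw [k1, k3]
    exact Set.pair_comm _ _
  · rcases key with ⟨k1, k2, k3, k4⟩ | ⟨k1, k2, k3, k4⟩ <;> rw [k2, k4]
    exact Set.pair_comm _ _
end
end

section
/- Let X be a finite set of points in ℝ² with the L1 metric, and let a, b ∈ X be distinct points such that for each of a and b its first, second and fourth quadrants are all empty. Then {a,b} is a horizontal or vertical pair, and the line ⟨a,b⟩ equals X. -/
noncomputable section
open Classical

/-- Betweenness from coordinatewise betweenness. -/
lemma rho_add_of_coord {u z v : ℝ × ℝ}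
    (h1 : (u.1 ≤ z.1 ∧ z.1 ≤ v.1) ∨ (v.1 ≤ z.1 ∧ z.1 ≤ u.1))
    (h2 : (u.2 ≤ z.2 ∧ z.2 ≤ v.2) ∨ (v.2 ≤ z.2 ∧ z.2 ≤ u.2)) :
    rho u v = rho u z + rho z v := by
  have key : ∀ p q r : ℝ, (p ≤ q ∧ q ≤ r) ∨ (r ≤ q ∧ q ≤ p) →
      |p - r| = |p - q| + |q - r| := by
    rintro p q r (⟨h, h'⟩ | ⟨h, h'⟩)
    · rw [abs_of_nonpos (by linarith), abs_of_nonpos (by linarith),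
        abs_of_nonpos (by linarith)]
      ring
    · rw [abs_of_nonneg (by linarith), abs_of_nonneg (by linarith),
        abs_of_nonneg (by linarith)]
      ring
  unfold rho
  rw [key _ _ _ h1, key _ _ _ h2]
  ring

/-- A point of `X` lies on the line `⟨a,b⟩` once some betweenness holds coordinatewise. -/
lemma line_mem_aux {a b z : ℝ × ℝ} (hab : a ≠ b)
    (h : rho a b = rho a z + rho z b ∨ rho z b = rho z a + rho a b ∨
      rho a z = rho a b + rho b z) :
    z = a ∨ z = b ∨ MBtw a z b ∨ MBtw z a b ∨ MBtw a b z := by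
  by_cases h1 : z = a
  · exact Or.inl h1
  by_cases h2 : z = b
  · exact Or.inr (Or.inl h2)
  right; right
  rcases h with h | h | h
  · exact Or.inl ⟨fun e => h1 e.symm, h2, hab, h⟩
  · exact Or.inr (Or.inl ⟨h1, hab, h2, h⟩)
  · exact Or.inr (Or.inr ⟨hab, fun e => h2 e.symm, fun e => h1 e.symm, h⟩)

/-- If `a, b ∈ X` are distinct points such that for each of them the first,
second and fourth quadrants are all empty, then `{a,b}` is a horizontal or
vertical pair and the line `⟨a,b⟩` is universal. -/
theorem two_dominant_points_universal_line (X : Finset (ℝ × ℝ)) (a b : ℝ × ℝ)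
    (haX : a ∈ X) (hbX : b ∈ X) (hab : a ≠ b)
    (haQ1 : ∀ z ∈ X, ¬(a.1 < z.1 ∧ a.2 < z.2))
    (haQ2 : ∀ z ∈ X, ¬(z.1 < a.1 ∧ a.2 < z.2))
    (haQ4 : ∀ z ∈ X, ¬(a.1 < z.1 ∧ z.2 < a.2))
    (hbQ1 : ∀ z ∈ X, ¬(b.1 < z.1 ∧ b.2 < z.2))
    (hbQ2 : ∀ z ∈ X, ¬(z.1 < b.1 ∧ b.2 < z.2))
    (hbQ4 : ∀ z ∈ X, ¬(b.1 < z.1 ∧ z.2 < b.2)) :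
    (a.2 = b.2 ∨ a.1 = b.1) ∧ lineThrough X a b = X := by
  have hpair : a.2 = b.2 ∨ a.1 = b.1 := by
    have := haQ1 b hbX
    have := haQ2 b hbX
    have := haQ4 b hbX
    have := hbQ1 a haX
    grind
  refine ⟨hpair, ?_⟩
  unfold lineThrough
  rw [Finset.filter_eq_self]
  intro z hz
  apply line_mem_aux hab
  have ha1 := haQ1 z hz
  have ha2 := haQ2 z hz
  have ha4 := haQ4 z hz
  have hb1 := hbQ1 z hz
  have hb2 := hbQ2 z hz
  have hb4 := hbQ4 z hz
  have hne : a.1 ≠ b.1 ∨ a.2 ≠ b.2 := by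
    by_contra hcon
    push Not at hcon
    exact hab (Prod.ext hcon.1 hcon.2)
  have A := @rho_add_of_coord a z b
  have B := @rho_add_of_coord z a b
  have C := @rho_add_of_coord a b z
  by_contra hcon
  push Not at hcon
  obtain ⟨nA, nB, nC⟩ := hcon
  have A' := fun h1 h2 => nA (A h1 h2)
  have B' := fun h1 h2 => nB (B h1 h2)
  have C' := fun h1 h2 => nC (C h1 h2)
  clear A B C nA nB nC haQ1 haQ2 haQ4 hbQ1 hbQ2 hbQ4
  grind
end
end

section
/- Let X be a finite set of points in ℝ² with the L1 metric, and let a ∈ X be a point whose first, second and fourth quadrants are all empty. If b ∈ X satisfies either x(b) = x(a) and y(b) > y(a), or y(b) = y(a) and x(b) > x(a), then the line ⟨a,b⟩ equals X. -/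
noncomputable section
open Classical

/-- If `a ∈ X` has its first, second and fourth quadrants all empty, and
`b ∈ X` lies on the open vertical half-line above `a` or the open horizontal
half-line to the right of `a`, then the line `⟨a,b⟩` is universal. -/
theorem dominant_point_halfline_universal (X : Finset (ℝ × ℝ)) (a b : ℝ × ℝ)
    (haX : a ∈ X) (hbX : b ∈ X)
    (haQ1 : ∀ z ∈ X, ¬(a.1 < z.1 ∧ a.2 < z.2))
    (haQ2 : ∀ z ∈ X, ¬(z.1 < a.1 ∧ a.2 < z.2))
    (haQ4 : ∀ z ∈ X, ¬(a.1 < z.1 ∧ z.2 < a.2))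
    (hb : (b.1 = a.1 ∧ a.2 < b.2) ∨ (b.2 = a.2 ∧ a.1 < b.1)) :
    lineThrough X a b = X := by
  unfold lineThrough
  rw [Finset.filter_eq_self]
  rintro ⟨z1, z2⟩ hz
  have q1 := haQ1 _ hz
  have q2 := haQ2 _ hz
  have q4 := haQ4 _ hz
  obtain ⟨a1, a2⟩ := a
  obtain ⟨b1, b2⟩ := b
  simp only [not_and, not_lt] at q1 q2 q4 hb
  by_cases hza : ((z1, z2) : ℝ × ℝ) = (a1, a2)
  · exact Or.inl hza
  by_cases hzb : ((z1, z2) : ℝ × ℝ) = (b1, b2)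
  · exact Or.inr (Or.inl hzb)
  have hab : ((a1, a2) : ℝ × ℝ) ≠ (b1, b2) := by
    intro h
    rw [Prod.mk.injEq] at h
    rcases hb with h' | h' <;> linarith [h.1, h.2, h'.1, h'.2]
  refine Or.inr (Or.inr ?_)
  have key1 : rho (a1, a2) (b1, b2) = rho (a1, a2) (z1, z2) + rho (z1, z2) (b1, b2) ∨
      rho (z1, z2) (b1, b2) = rho (z1, z2) (a1, a2) + rho (a1, a2) (b1, b2) ∨
      rho (a1, a2) (z1, z2) = rho (a1, a2) (b1, b2) + rho (b1, b2) (z1, z2) := by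
    simp only [rho]
    rcases hb with ⟨rfl, hlt⟩ | ⟨rfl, hlt⟩
    · rcases le_or_gt z2 a2 with h | h
      · refine Or.inr (Or.inl ?_)
        rw [abs_of_nonpos (by linarith : z2 - b2 ≤ 0), abs_of_nonpos (by linarith : z2 - a2 ≤ 0),
          abs_of_nonpos (by linarith : a2 - b2 ≤ 0), sub_self, abs_zero]
        ring
      · have e : z1 = b1 := by
          rcases lt_trichotomy z1 b1 with h1 | h1 | h1
          · linarith [q2 h1]
          · exact h1
          · linarith [q1 h1]
        subst e
        rcases le_total z2 b2 with h2 | h2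
        · left
          rw [abs_of_nonpos (by linarith : a2 - b2 ≤ 0), abs_of_nonpos (by linarith : a2 - z2 ≤ 0),
            abs_of_nonpos (by linarith : z2 - b2 ≤ 0), sub_self, abs_zero]
          ring
        · right; right
          rw [abs_of_nonpos (by linarith : a2 - b2 ≤ 0), abs_of_nonpos (by linarith : a2 - z2 ≤ 0),
            abs_of_nonpos (by linarith : b2 - z2 ≤ 0), sub_self, abs_zero]
          ring
    · rcases le_or_gt z1 a1 with h | h
      · refine Or.inr (Or.inl ?_)
        rw [abs_of_nonpos (by linarith : z1 - b1 ≤ 0), abs_of_nonpos (by linarith : z1 - a1 ≤ 0),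
          abs_of_nonpos (by linarith : a1 - b1 ≤ 0), sub_self, abs_zero]
        ring
      · have e : z2 = b2 := le_antisymm (q1 h) (q4 h)
        subst e
        rcases le_total z1 b1 with h2 | h2
        · left
          rw [abs_of_nonpos (by linarith : a1 - b1 ≤ 0), abs_of_nonpos (by linarith : a1 - z1 ≤ 0),
            abs_of_nonpos (by linarith : z1 - b1 ≤ 0), sub_self, abs_zero]
          ring
        · right; right
          rw [abs_of_nonpos (by linarith : a1 - b1 ≤ 0), abs_of_nonpos (by linarith : a1 - z1 ≤ 0),
            abs_of_nonpos (by linarith : b1 - z1 ≤ 0), sub_self, abs_zero]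
          ring
  rcases key1 with h | h | h
  · exact Or.inl ⟨Ne.symm hza, hzb, hab, h⟩
  · exact Or.inr (Or.inl ⟨hza, hab, hzb, h⟩)
  · exact Or.inr (Or.inr ⟨hab, Ne.symm hzb, Ne.symm hza, h⟩)
end
end
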